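/- arXiv:2509.14521 — 3 statements merged into one kernel-verified Lean document; each statement's English description precedes it below -/
import Mathlib

section
/- Let d ≥ 1 and let K be a d×d real matrix with all entries strictly positive. Then for all vectors x, y ∈ ℝ^d with strictly positive entries, d_H(K x, K y) ≤ tanh(Δ(K)/4) · d_H(x, y), where Δ(K) is the projective diameter of K. -/
/-- The Hilbert projective metric on strictly positive vectors:
`d_H(x, y) = log (max_j x_j / y_j) - log (min_j x_j / y_j)`. -/
noncomputable def hilbertDist {d : ℕ} (x y : Fin d → ℝ) : ℝ :=
  Real.log (⨆ j, x j / y j) - Real.log (⨅ j, x j / y j)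

/-- The projective diameter of a strictly positive matrix:
`Δ(M) = max_{j,j'} ( max_ℓ log(M_{ℓj}/M_{ℓj'}) - min_ℓ log(M_{ℓj}/M_{ℓj'}) )`. -/
noncomputable def projDiam {d : ℕ} (M : Matrix (Fin d) (Fin d) ℝ) : ℝ :=
  ⨆ j, ⨆ j', ((⨆ l, Real.log (M l j / M l j')) - ⨅ l, Real.log (M l j / M l j'))

/-!
The matrix acts on the geometric path `z t j = y j * exp (t * s j)`, `s j = log (x j / y j)`, from
`y` to `x`. Along it, `log (K z)_i - log (K z)_i'` has derivative `∑ j, (p j - q j) * s j`, where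
`p` and `q` are the probability weights proportional to `K i j * z j` and `K i' j * z j`. The
cross-ratios `p j * q k / (q j * p k)` do not depend on `z`, and they are at most `exp Δ(K)`; this
forces the total variation distance of `p` and `q` to be at most `tanh (Δ(K) / 4)`. Hence the
derivative is at most `tanh (Δ(K) / 4)` times the oscillation of `s`, which is `d_H(x, y)`, and the
mean value theorem concludes.
-/

open Finset Real

section CrossRatio

variable {ι : Type*}

/-- The cross-ratios `p j * q k / (q j * p k)` of two weights are at most `exp D`; for positive
weights, `D` bounds their Hilbert projective distance. Written without division, so that the
condition is also meaningful for weights that vanish somewhere. -/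
def CrossRatioLE (D : ℝ) (p q : ι → ℝ) : Prop :=
  ∀ j k, p j * q k ≤ exp D * (q j * p k)

namespace CrossRatioLE

variable {D : ℝ} {p q : ι → ℝ}

lemma nonneg [Nonempty ι] (h : CrossRatioLE D p q) (hp : ∀ j, 0 < p j) (hq : ∀ j, 0 < q j) :
    0 ≤ D := by
  obtain ⟨j⟩ := ‹Nonempty ι›
  have hpq : 0 < q j * p j := mul_pos (hq j) (hp j)
  have hjj : 1 * (q j * p j) ≤ exp D * (q j * p j) := by
    simpa only [one_mul, mul_comm (p j)] using h j j
  exact one_le_exp_iff.mp (le_of_mul_le_mul_right hjj hpq)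

lemma mul_right (h : CrossRatioLE D p q) {w : ι → ℝ} (hw : ∀ j, 0 ≤ w j) :
    CrossRatioLE D (fun j => p j * w j) (fun j => q j * w j) := fun j k =>
  calc p j * w j * (q k * w k) = p j * q k * (w j * w k) := by ring
    _ ≤ exp D * (q j * p k) * (w j * w k) :=
      mul_le_mul_of_nonneg_right (h j k) (mul_nonneg (hw j) (hw k))
    _ = exp D * (q j * w j * (p k * w k)) := by ring

lemma div_const (h : CrossRatioLE D p q) {a b : ℝ} (ha : 0 ≤ a) (hb : 0 ≤ b) :
    CrossRatioLE D (fun j => p j / a) (fun j => q j / b) := fun j k =>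
  calc p j / a * (q k / b) = p j * q k / (a * b) := by ring
    _ ≤ exp D * (q j * p k) / (a * b) := div_le_div_of_nonneg_right (h j k) (mul_nonneg ha hb)
    _ = exp D * (q j / b * (p k / a)) := by ring

lemma sum_mul_sum_le (h : CrossRatioLE D p q) (S T : Finset ι) :
    (∑ j ∈ S, p j) * ∑ k ∈ T, q k ≤ exp D * ((∑ j ∈ S, q j) * ∑ k ∈ T, p k) := by
  rw [sum_mul_sum, sum_mul_sum, mul_sum]
  simp only [mul_sum]
  exact sum_le_sum fun j _ => sum_le_sum fun k _ => h j k

end CrossRatioLE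

end CrossRatio

section TotalVariation

lemma le_tanh_iff {x u : ℝ} : x ≤ tanh u ↔ 1 + x ≤ exp (2 * u) * (1 - x) := by
  have hu : 0 < exp u := exp_pos u
  rw [tanh_eq_sinh_div_cosh, le_div_iff₀ (cosh_pos u), sinh_eq, cosh_eq, exp_neg, two_mul, exp_add,
    ← mul_le_mul_iff_of_pos_left (mul_pos two_pos hu)]
  field_simp
  constructor <;> intro h <;> linarith

lemma sub_le_tanh_of_odds_le {P Q D : ℝ} (hP : P ≤ 1) (hQ : 0 ≤ Q) (hD : 0 ≤ D)
    (h : P * (1 - Q) ≤ exp D * (Q * (1 - P))) : P - Q ≤ tanh (D / 4) := by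
  have amgm : 4 * (Q * (1 - P)) ≤ (1 - (P - Q)) ^ 2 := by
    linarith [four_mul_le_sq_add Q (1 - P)]
  have hsq : (1 + (P - Q)) ^ 2 ≤ (exp (D / 2) * (1 - (P - Q))) ^ 2 :=
    calc (1 + (P - Q)) ^ 2
        = (1 - (P - Q)) ^ 2 + 4 * (P * (1 - Q) - Q * (1 - P)) := by ring
      _ ≤ (1 - (P - Q)) ^ 2 + (exp D - 1) * (4 * (Q * (1 - P))) := by linarith
      _ ≤ (1 - (P - Q)) ^ 2 + (exp D - 1) * (1 - (P - Q)) ^ 2 := by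
        gcongr
        exact sub_nonneg.mpr (one_le_exp hD)
      _ = (exp (D / 2) * (1 - (P - Q))) ^ 2 := by
        rw [mul_pow, ← exp_nat_mul, Nat.cast_ofNat, mul_div_cancel₀ D two_ne_zero]
        ring
  rw [le_tanh_iff, show 2 * (D / 4) = D / 2 by ring]
  exact le_of_sq_le_sq hsq (mul_nonneg (exp_pos _).le (by linarith))

variable {ι : Type*} [Fintype ι]

lemma CrossRatioLE.sum_sub_le_tanh {D : ℝ} {p q : ι → ℝ} (h : CrossRatioLE D p q) (hD : 0 ≤ D)
    (hp : ∀ j, 0 ≤ p j) (hq : ∀ j, 0 ≤ q j) (hp_sum : ∑ j, p j = 1) (hq_sum : ∑ j, q j = 1)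
    (S : Finset ι) : ∑ j ∈ S, (p j - q j) ≤ tanh (D / 4) := by
  classical
  have hp_compl : 1 - ∑ j ∈ S, p j = ∑ j ∈ Sᶜ, p j := by
    rw [← hp_sum, ← sum_add_sum_compl S p, add_sub_cancel_left]
  have hq_compl : 1 - ∑ j ∈ S, q j = ∑ j ∈ Sᶜ, q j := by
    rw [← hq_sum, ← sum_add_sum_compl S q, add_sub_cancel_left]
  rw [sum_sub_distrib]
  refine sub_le_tanh_of_odds_le ?_ (sum_nonneg fun j _ => hq j) hD ?_
  · exact hp_sum ▸ sum_le_univ_sum_of_nonneg hp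
  · rw [hp_compl, hq_compl]
    exact h.sum_mul_sum_le S Sᶜ

lemma sum_mul_le_of_sum_eq_zero [Nonempty ι] {w s : ι → ℝ} {T m M : ℝ} (hw : ∑ j, w j = 0)
    (hT : ∀ S : Finset ι, ∑ j ∈ S, w j ≤ T) (hs : ∀ j, s j ∈ Set.Icc m M) :
    ∑ j, w j * s j ≤ T * (M - m) := by
  have hmM : 0 ≤ M - m :=
    have ⟨hm, hM⟩ := hs (Classical.arbitrary ι)
    sub_nonneg.mpr (hm.trans hM)
  calc ∑ j, w j * s j = ∑ j, w j * (s j - m) := by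
        simp only [mul_sub, sum_sub_distrib, ← sum_mul, hw, zero_mul, sub_zero]
    _ ≤ ∑ j with 0 ≤ w j, w j * (M - m) := by
        rw [sum_filter]
        refine sum_le_sum fun j _ => ?_
        split_ifs with hj
        · exact mul_le_mul_of_nonneg_left (sub_le_sub_right (hs j).2 m) hj
        · exact mul_nonpos_of_nonpos_of_nonneg (not_le.mp hj).le (sub_nonneg.mpr (hs j).1)
    _ = (∑ j with 0 ≤ w j, w j) * (M - m) := (sum_mul ..).symm
    _ ≤ T * (M - m) := mul_le_mul_of_nonneg_right (hT _) hmM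

end TotalVariation

section ExpTilt

variable {ι : Type*} [Fintype ι]

/-- The exponential tilting (Gibbs weights) of `p` by `s`: the probability weights proportional to
`p j * exp (s j)`. The mean of `s` under `expTilt p (t • s)` is the derivative of
`t ↦ log (∑ j, p j * exp (t * s j))`. -/
noncomputable def expTilt (p s : ι → ℝ) (j : ι) : ℝ :=
  p j * exp (s j) / ∑ k, p k * exp (s k)

variable [Nonempty ι] {p q : ι → ℝ}

lemma sum_mul_exp_pos (hp : ∀ j, 0 < p j) (s : ι → ℝ) : 0 < ∑ j, p j * exp (s j) :=
  sum_pos (fun j _ => mul_pos (hp j) (exp_pos _)) univ_nonempty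

lemma expTilt_pos (hp : ∀ j, 0 < p j) (s : ι → ℝ) (j : ι) : 0 < expTilt p s j :=
  div_pos (mul_pos (hp j) (exp_pos _)) (sum_mul_exp_pos hp s)

lemma sum_expTilt (hp : ∀ j, 0 < p j) (s : ι → ℝ) : ∑ j, expTilt p s j = 1 := by
  simp only [expTilt, ← sum_div, div_self (sum_mul_exp_pos hp s).ne']

lemma CrossRatioLE.expTilt {D : ℝ} (h : CrossRatioLE D p q) (hp : ∀ j, 0 < p j)
    (hq : ∀ j, 0 < q j) (s : ι → ℝ) : CrossRatioLE D (expTilt p s) (expTilt q s) :=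
  (h.mul_right fun j => (exp_pos (s j)).le).div_const (sum_mul_exp_pos hp s).le
    (sum_mul_exp_pos hq s).le

lemma hasDerivAt_log_sum_mul_exp (hp : ∀ j, 0 < p j) (s : ι → ℝ) (t : ℝ) :
    HasDerivAt (fun t => log (∑ j, p j * exp (t * s j))) (∑ j, expTilt p (t • s) j * s j) t := by
  have hsum : HasDerivAt (fun t => ∑ j, p j * exp (t * s j))
      (∑ j, p j * (exp (t * s j) * s j)) t :=
    HasDerivAt.fun_sum fun j _ => ((hasDerivAt_mul_const (s j)).exp).const_mul (p j)
  convert hsum.log (sum_mul_exp_pos hp (t • s)).ne' using 1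
  simp only [expTilt, Pi.smul_apply, smul_eq_mul, sum_div]
  exact sum_congr rfl fun j _ => by ring

lemma CrossRatioLE.log_sum_mul_exp_sub_le {D m M : ℝ} {s : ι → ℝ} (h : CrossRatioLE D p q)
    (hp : ∀ j, 0 < p j) (hq : ∀ j, 0 < q j) (hs : ∀ j, s j ∈ Set.Icc m M) :
    (log (∑ j, p j * exp (s j)) - log (∑ j, q j * exp (s j)))
      - (log (∑ j, p j) - log (∑ j, q j)) ≤ tanh (D / 4) * (M - m) := by
  have hderiv (t : ℝ) :=
    (hasDerivAt_log_sum_mul_exp hp s t).fun_sub (hasDerivAt_log_sum_mul_exp hq s t)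
  obtain ⟨t, -, ht⟩ := exists_hasDerivAt_eq_slope _ _ (zero_lt_one' ℝ)
    (fun t _ => (hderiv t).continuousAt.continuousWithinAt) (fun t _ => hderiv t)
  simp only [one_mul, zero_mul, exp_zero, mul_one, sub_zero, div_one] at ht
  rw [← ht, ← sum_sub_distrib]
  simp only [← sub_mul]
  refine sum_mul_le_of_sum_eq_zero ?_ (fun S => ?_) hs
  · rw [sum_sub_distrib, sum_expTilt hp, sum_expTilt hq, sub_self]
  · exact (h.expTilt hp hq (t • s)).sum_sub_le_tanh (h.nonneg hp hq)
      (fun j => (expTilt_pos hp _ j).le) (fun j => (expTilt_pos hq _ j).le)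
      (sum_expTilt hp _) (sum_expTilt hq _) S

end ExpTilt

section HilbertMetric

variable {ι κ : Type*} {m n : ℕ}

lemma log_div_mem_Icc [Finite ι] {x y : ι → ℝ} (hx : ∀ j, 0 < x j) (hy : ∀ j, 0 < y j) (j : ι) :
    log (x j / y j) ∈ Set.Icc (log (⨅ k, x k / y k)) (log (⨆ k, x k / y k)) := by
  have hxy (k : ι) : 0 < x k / y k := div_pos (hx k) (hy k)
  have : Nonempty ι := ⟨j⟩
  obtain ⟨i, hi⟩ := exists_eq_ciInf_of_finite (f := fun k => x k / y k)
  exact ⟨log_le_log (hi ▸ hxy i) (Finite.ciInf_le (fun k => x k / y k) j),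
    log_le_log (hxy j) (Finite.le_ciSup (fun k => x k / y k) j)⟩

lemma hilbertDist_le [NeZero n] {x y : Fin n → ℝ} (hx : ∀ j, 0 < x j) (hy : ∀ j, 0 < y j) {C : ℝ}
    (h : ∀ i i', (log (x i) - log (x i')) - (log (y i) - log (y i')) ≤ C) :
    hilbertDist x y ≤ C := by
  obtain ⟨i, hi⟩ := exists_eq_ciSup_of_finite (f := fun j => x j / y j)
  obtain ⟨i', hi'⟩ := exists_eq_ciInf_of_finite (f := fun j => x j / y j)
  rw [hilbertDist, ← hi, ← hi', log_div (hx i).ne' (hy i).ne', log_div (hx i').ne' (hy i').ne',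
    sub_sub_sub_comm]
  exact h i i'

lemma log_div_sub_log_div_le_projDiam (K : Matrix (Fin n) (Fin n) ℝ) (i i' j k : Fin n) :
    log (K i j / K i k) - log (K i' j / K i' k) ≤ projDiam K := by
  refine Finite.le_ciSup_of_le j (Finite.le_ciSup_of_le k (sub_le_sub ?_ ?_))
  · exact Finite.le_ciSup (fun l => log (K l j / K l k)) i
  · exact Finite.ciInf_le (fun l => log (K l j / K l k)) i'

lemma crossRatioLE_projDiam {K : Matrix (Fin n) (Fin n) ℝ} (hK : ∀ i j, 0 < K i j)
    (i i' : Fin n) : CrossRatioLE (projDiam K) (K i) (K i') := by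
  intro j k
  have hdiv (l : Fin n) : 0 < K l j / K l k := div_pos (hK l j) (hK l k)
  have hratio := log_div_sub_log_div_le_projDiam K i i' j k
  rw [← log_div (hdiv i).ne' (hdiv i').ne', log_le_iff_le_exp (div_pos (hdiv i) (hdiv i')),
    div_div_div_eq, div_le_iff₀ (mul_pos (hK i k) (hK i' j))] at hratio
  rwa [mul_comm (K i' j)]

lemma mulVec_pos [Fintype κ] [Nonempty κ] {K : Matrix ι κ ℝ} (hK : ∀ i j, 0 < K i j) {x : κ → ℝ}
    (hx : ∀ j, 0 < x j) (i : ι) : 0 < K.mulVec x i :=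
  sum_pos (fun j _ => mul_pos (hK i j) (hx j)) univ_nonempty

theorem birkhoff_hilbert_contraction_general [NeZero m] [NeZero n] {K : Matrix (Fin m) (Fin n) ℝ}
    (hK : ∀ i j, 0 < K i j) {D : ℝ} (hKD : ∀ i i', CrossRatioLE D (K i) (K i'))
    {x y : Fin n → ℝ} (hx : ∀ j, 0 < x j) (hy : ∀ j, 0 < y j) :
    hilbertDist (K.mulVec x) (K.mulVec y) ≤ tanh (D / 4) * hilbertDist x y := by
  refine hilbertDist_le (mulVec_pos hK hx) (mulVec_pos hK hy) fun i i' => ?_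
  have hpos (i : Fin m) (j : Fin n) : 0 < K i j * y j := mul_pos (hK i j) (hy j)
  have hx_eq (i : Fin m) : K.mulVec x i = ∑ j, K i j * y j * exp (log (x j / y j)) := by
    rw [Matrix.mulVec, dotProduct]
    refine sum_congr rfl fun j _ => ?_
    rw [exp_log (div_pos (hx j) (hy j)), mul_assoc, mul_div_cancel₀ _ (hy j).ne']
  rw [hx_eq i, hx_eq i']
  exact ((hKD i i').mul_right fun j => (hy j).le).log_sum_mul_exp_sub_le (hpos i) (hpos i')
    (log_div_mem_Icc hx hy)

end HilbertMetric

/-- Birkhoff's contraction theorem: a strictly positive matrix contracts the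
Hilbert projective metric with factor `tanh(Δ(K)/4)`. -/
theorem birkhoff_hilbert_contraction {d : ℕ} (hd : 1 ≤ d)
    (K : Matrix (Fin d) (Fin d) ℝ) (hK : ∀ l j, 0 < K l j) :
    ∀ x y : Fin d → ℝ, (∀ j, 0 < x j) → (∀ j, 0 < y j) →
      hilbertDist (K.mulVec x) (K.mulVec y) ≤
        Real.tanh (projDiam K / 4) * hilbertDist x y := by
  intro x y hx hy
  have : NeZero d := ⟨Nat.one_le_iff_ne_zero.mp hd⟩
  exact birkhoff_hilbert_contraction_general hK (crossRatioLE_projDiam hK) hx hy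
end

section
/- Let d ≥ 1, N ≥ 1, and let x_1, …, x_N and y_1, …, y_N be vectors in ℝ^d with strictly positive entries. Define the coordinatewise geometric mean G(x_1, …, x_N) by G_j = (∏_{i=1}^N (x_i)_j)^{1/N}. Then d_H(G(x_1, …, x_N), G(y_1, …, y_N)) ≤ (1/N) ∑_{i=1}^N d_H(x_i, y_i); in particular the geometric mean is nonexpansive with respect to the maximum of the Hilbert distances. -/
/-- The coordinatewise geometric mean `G(x_1, …, x_N)_j = (∏_i (x_i)_j)^{1/N}`. -/
noncomputable def geomMean {d N : ℕ} (x : Fin N → Fin d → ℝ) : Fin d → ℝ :=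
  fun j => (∏ i, x i j) ^ ((1 : ℝ) / N)

/-!
The Hilbert distance `d_H(x, y)` is the oscillation `max_{j,k} (log (x_j / y_j) - log (x_k / y_k))`
of the vector `log (x / y)`. A geometric mean turns these logarithmic ratios into their weighted
average, and the oscillation of an average is at most the average of the oscillations.
-/

section WeightedGeomMean

variable {ι κ : Type*} [Fintype ι]

/-- The coordinatewise weighted geometric mean of a finite family of vectors, which makes the
exponents in `geomMean` arbitrary; the weights are not required to sum to one. -/
noncomputable def weightedGeomMean (w : ι → ℝ) (x : ι → κ → ℝ) : κ → ℝ :=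
  fun j => ∏ i, x i j ^ w i

theorem geomMean_eq_weightedGeomMean {d N : ℕ} {x : Fin N → Fin d → ℝ}
    (hx : ∀ i j, 0 ≤ x i j) :
    geomMean x = weightedGeomMean (fun _ => (1 : ℝ) / N) x :=
  funext fun j => (Real.finsetProd_rpow _ _ (fun i _ => hx i j) _).symm

theorem weightedGeomMean_div (w : ι → ℝ) {x y : ι → κ → ℝ}
    (hx : ∀ i j, 0 ≤ x i j) (hy : ∀ i j, 0 ≤ y i j) :
    weightedGeomMean w (x / y) = weightedGeomMean w x / weightedGeomMean w y := by
  funext j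
  simp only [weightedGeomMean, Pi.div_apply, Real.div_rpow (hx _ j) (hy _ j),
    Finset.prod_div_distrib]

theorem log_weightedGeomMean (w : ι → ℝ) {x : ι → κ → ℝ} {j : κ} (hx : ∀ i, 0 < x i j) :
    Real.log (weightedGeomMean w x j) = ∑ i, w i * Real.log (x i j) := by
  rw [weightedGeomMean, Real.log_prod fun i _ => (Real.rpow_pos_of_pos (hx i) _).ne']
  exact Finset.sum_congr rfl fun i _ => Real.log_rpow (hx i) _

theorem log_weightedGeomMean_div_weightedGeomMean (w : ι → ℝ) {x y : ι → κ → ℝ}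
    (hx : ∀ i j, 0 < x i j) (hy : ∀ i j, 0 < y i j) (j : κ) :
    Real.log (weightedGeomMean w x j / weightedGeomMean w y j) =
      ∑ i, w i * Real.log (x i j / y i j) := by
  rw [← Pi.div_apply, ← weightedGeomMean_div w (fun i j => (hx i j).le) fun i j => (hy i j).le]
  exact log_weightedGeomMean w fun i => div_pos (hx i j) (hy i j)

end WeightedGeomMean

section HilbertDist

variable {d : ℕ}

theorem exists_hilbertDist_eq [NeZero d] (x y : Fin d → ℝ) :
    ∃ j k, hilbertDist x y = Real.log (x j / y j) - Real.log (x k / y k) := by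
  obtain ⟨j, hj⟩ := exists_eq_ciSup_of_finite (f := fun j => x j / y j)
  obtain ⟨k, hk⟩ := exists_eq_ciInf_of_finite (f := fun j => x j / y j)
  exact ⟨j, k, by rw [hilbertDist, ← hj, ← hk]⟩

theorem log_div_sub_log_div_le_hilbertDist {x y : Fin d → ℝ}
    (hx : ∀ j, 0 < x j) (hy : ∀ j, 0 < y j) (j k : Fin d) :
    Real.log (x j / y j) - Real.log (x k / y k) ≤ hilbertDist x y := by
  have : Nonempty (Fin d) := ⟨j⟩
  have ratio_pos (l : Fin d) : 0 < x l / y l := div_pos (hx l) (hy l)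
  have iInf_pos : 0 < ⨅ l, x l / y l := by
    obtain ⟨l, hl⟩ := exists_eq_ciInf_of_finite (f := fun l => x l / y l)
    exact hl ▸ ratio_pos l
  exact sub_le_sub
    (Real.log_le_log (ratio_pos j) (Finite.le_ciSup (fun l => x l / y l) j))
    (Real.log_le_log iInf_pos (Finite.ciInf_le (fun l => x l / y l) k))

end HilbertDist

section Nonexpansive

variable {ι : Type*} [Fintype ι] {w : ι → ℝ}

theorem sum_mul_le_sum_mul_ciSup (hw : ∀ i, 0 ≤ w i) (f : ι → ℝ) :
    ∑ i, w i * f i ≤ (∑ i, w i) * ⨆ i, f i := by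
  rw [Finset.sum_mul]
  exact Finset.sum_le_sum fun i _ => mul_le_mul_of_nonneg_left (Finite.le_ciSup f i) (hw i)

variable {d : ℕ} [NeZero d] {x y : ι → Fin d → ℝ}

theorem hilbertDist_weightedGeomMean_le (hw : ∀ i, 0 ≤ w i)
    (hx : ∀ i j, 0 < x i j) (hy : ∀ i j, 0 < y i j) :
    hilbertDist (weightedGeomMean w x) (weightedGeomMean w y) ≤
      ∑ i, w i * hilbertDist (x i) (y i) := by
  obtain ⟨j, k, hjk⟩ := exists_hilbertDist_eq (weightedGeomMean w x) (weightedGeomMean w y)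
  calc hilbertDist (weightedGeomMean w x) (weightedGeomMean w y)
      = ∑ i, w i * (Real.log (x i j / y i j) - Real.log (x i k / y i k)) := by
        simp only [hjk, log_weightedGeomMean_div_weightedGeomMean w hx hy, mul_sub,
          Finset.sum_sub_distrib]
    _ ≤ ∑ i, w i * hilbertDist (x i) (y i) :=
        Finset.sum_le_sum fun i _ => mul_le_mul_of_nonneg_left
          (log_div_sub_log_div_le_hilbertDist (hx i) (hy i) j k) (hw i)

theorem geomMean_hilbert_nonexpansive_general (hw : ∀ i, 0 ≤ w i)
    (hx : ∀ i j, 0 < x i j) (hy : ∀ i j, 0 < y i j) :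
    hilbertDist (weightedGeomMean w x) (weightedGeomMean w y) ≤
      ∑ i, w i * hilbertDist (x i) (y i) ∧
    hilbertDist (weightedGeomMean w x) (weightedGeomMean w y) ≤
      (∑ i, w i) * ⨆ i, hilbertDist (x i) (y i) :=
  have le_sum := hilbertDist_weightedGeomMean_le hw hx hy
  ⟨le_sum, le_sum.trans (sum_mul_le_sum_mul_ciSup hw _)⟩

end Nonexpansive

/-- The coordinatewise geometric mean satisfies
`d_H(G(x), G(y)) ≤ (1/N) ∑_i d_H(x_i, y_i)`; in particular it is nonexpansive
with respect to the maximum of the Hilbert distances. -/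
theorem geomMean_hilbert_nonexpansive {d N : ℕ} (hd : 1 ≤ d) (hN : 1 ≤ N)
    (x y : Fin N → Fin d → ℝ)
    (hx : ∀ i j, 0 < x i j) (hy : ∀ i j, 0 < y i j) :
    hilbertDist (geomMean x) (geomMean y) ≤
      (1 / N) * ∑ i, hilbertDist (x i) (y i) ∧
    hilbertDist (geomMean x) (geomMean y) ≤
      ⨆ i, hilbertDist (x i) (y i) := by
  have : NeZero d := .of_pos hd
  simpa [geomMean_eq_weightedGeomMean, (hx _ _).le, (hy _ _).le, ← Finset.mul_sum,
      Nat.ne_of_gt hN] using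
    geomMean_hilbert_nonexpansive_general (w := fun _ => 1 / N) (fun _ => by positivity) hx hy
end

section
/- Let d ≥ 1, let x, y ∈ ℝ^d have strictly positive entries, and suppose d_H(x, y) ≤ γ for some γ ≥ 0. Let p = x / ⟨1, x⟩ and q = y / ⟨1, y⟩ be the normalizations of x and y. Then ‖p − q‖₁ ≤ e^γ − 1. -/
/-- Normalization of a vector to a probability vector: `x / ⟨1, x⟩`. -/
noncomputable def normalizeVec {d : ℕ} (x : Fin d → ℝ) : Fin d → ℝ :=
  fun j => x j / ∑ k, x k

section Comparison

variable {ι R : Type*} [Ring R] [LinearOrder R]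

lemma abs_sub_le_sub_one_mul_min [IsOrderedAddMonoid R] {a b c : R} (hab : a ≤ c * b)
    (hba : b ≤ c * a) : |a - b| ≤ (c - 1) * min a b := by
  rcases le_total a b with h | h
  · rw [abs_of_nonpos (sub_nonpos.2 h), neg_sub, min_eq_left h, sub_one_mul]
    exact sub_le_sub_right hba a
  · rw [abs_of_nonneg (sub_nonneg.2 h), min_eq_right h, sub_one_mul]
    exact sub_le_sub_right hab b

lemma sum_abs_sub_le_sub_one_mul_sum [IsOrderedRing R] {s : Finset ι} {p q : ι → R} {c : R}
    (hc : 1 ≤ c) (hpq : ∀ i ∈ s, p i ≤ c * q i) (hqp : ∀ i ∈ s, q i ≤ c * p i) :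
    ∑ i ∈ s, |p i - q i| ≤ (c - 1) * ∑ i ∈ s, q i := by
  rw [Finset.mul_sum]
  refine Finset.sum_le_sum fun i hi => ?_
  calc |p i - q i| ≤ (c - 1) * min (p i) (q i) := abs_sub_le_sub_one_mul_min (hpq i hi) (hqp i hi)
    _ ≤ (c - 1) * q i := mul_le_mul_of_nonneg_left (min_le_right _ _) (sub_nonneg.2 hc)

end Comparison

lemma le_exp_log_iSup_sub_log_iInf_mul {ι : Type*} [Finite ι] {f : ι → ℝ} (hf : ∀ i, 0 < f i)
    (j k : ι) : f j ≤ Real.exp (Real.log (⨆ i, f i) - Real.log (⨅ i, f i)) * f k := by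
  have : Nonempty ι := ⟨j⟩
  have le_sup : f j ≤ ⨆ i, f i := le_ciSup (Set.finite_range f).bddAbove j
  have inf_le : ⨅ i, f i ≤ f k := ciInf_le (Set.finite_range f).bddBelow k
  have sup_pos : 0 < ⨆ i, f i := (hf j).trans_le le_sup
  have inf_pos : 0 < ⨅ i, f i := by
    obtain ⟨i, hi⟩ := exists_eq_ciInf_of_finite (f := f)
    exact hi ▸ hf i
  rw [Real.exp_sub, Real.exp_log sup_pos, Real.exp_log inf_pos]
  calc f j ≤ ⨆ i, f i := le_sup
    _ = (⨆ i, f i) / (⨅ i, f i) * ⨅ i, f i := (div_mul_cancel₀ _ inf_pos.ne').symm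
    _ ≤ (⨆ i, f i) / (⨅ i, f i) * f k := by gcongr

section Normalization

variable {d : ℕ} {x y : Fin d → ℝ}

lemma mul_le_exp_hilbertDist_mul (hx : ∀ j, 0 < x j) (hy : ∀ j, 0 < y j) (j k : Fin d) :
    x j * y k ≤ Real.exp (hilbertDist x y) * (x k * y j) := by
  have ratio_le : x j / y j ≤ Real.exp (hilbertDist x y) * (x k / y k) :=
    le_exp_log_iSup_sub_log_iInf_mul (fun i => div_pos (hx i) (hy i)) j k
  rwa [← mul_div_assoc, div_le_div_iff₀ (hy j) (hy k), mul_assoc] at ratio_le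

lemma sum_normalizeVec (hx : ∑ k, x k ≠ 0) : ∑ j, normalizeVec x j = 1 := by
  simp only [normalizeVec, ← Finset.sum_div, div_self hx]

lemma normalizeVec_le_mul_normalizeVec (hx : 0 < ∑ k, x k) (hy : 0 < ∑ k, y k) {c : ℝ} {j : Fin d}
    (h : ∀ k, x j * y k ≤ c * (x k * y j)) : normalizeVec x j ≤ c * normalizeVec y j := by
  simp only [normalizeVec]
  rw [← mul_div_assoc, div_le_div_iff₀ hx hy]
  calc x j * ∑ k, y k = ∑ k, x j * y k := Finset.mul_sum ..
    _ ≤ ∑ k, c * (x k * y j) := Finset.sum_le_sum fun k _ => h k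
    _ = c * y j * ∑ k, x k := by
      rw [← Finset.mul_sum, ← Finset.sum_mul, mul_comm (∑ k, x k), mul_assoc]

end Normalization

/-- Hilbert-to-`ℓ1` bridge: if `d_H(x, y) ≤ γ` then the normalizations of `x`
and `y` satisfy `‖p - q‖₁ ≤ e^γ - 1`. -/
theorem hilbert_to_l1_bridge {d : ℕ} (hd : 1 ≤ d)
    (x y : Fin d → ℝ) (hx : ∀ j, 0 < x j) (hy : ∀ j, 0 < y j)
    (γ : ℝ) (hγ : 0 ≤ γ) (hdH : hilbertDist x y ≤ γ) :
    ∑ j, |normalizeVec x j - normalizeVec y j| ≤ Real.exp γ - 1 := by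
  have : Nonempty (Fin d) := Fin.pos_iff_nonempty.1 hd
  have sum_x_pos : 0 < ∑ k, x k := Finset.sum_pos (fun k _ => hx k) Finset.univ_nonempty
  have sum_y_pos : 0 < ∑ k, y k := Finset.sum_pos (fun k _ => hy k) Finset.univ_nonempty
  have cross_le (j k : Fin d) : x j * y k ≤ Real.exp γ * (x k * y j) :=
    (mul_le_exp_hilbertDist_mul hx hy j k).trans <|
      mul_le_mul_of_nonneg_right (Real.exp_le_exp.2 hdH) (mul_pos (hx k) (hy j)).le
  have p_le (j : Fin d) : normalizeVec x j ≤ Real.exp γ * normalizeVec y j :=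
    normalizeVec_le_mul_normalizeVec sum_x_pos sum_y_pos (cross_le j)
  have q_le (j : Fin d) : normalizeVec y j ≤ Real.exp γ * normalizeVec x j :=
    normalizeVec_le_mul_normalizeVec sum_y_pos sum_x_pos fun k => by
      simpa only [mul_comm] using cross_le k j
  calc ∑ j, |normalizeVec x j - normalizeVec y j|
      ≤ (Real.exp γ - 1) * ∑ j, normalizeVec y j :=
        sum_abs_sub_le_sub_one_mul_sum (Real.one_le_exp hγ) (fun j _ => p_le j) fun j _ => q_le j
    _ = Real.exp γ - 1 := by rw [sum_normalizeVec sum_y_pos.ne', mul_one]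
end
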